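/- Let n ≥ 1 and let σ : ℂⁿ → ℂⁿ be a real-linear map whose determinant, as an ℝ-linear endomorphism of ℂⁿ, is positive. Suppose there exist vectors v₁, …, v_{n−1} ∈ ℂⁿ that are linearly independent over ℂ, and for each j = 1, …, n−1 there exist a nonzero vector w_j ∈ ℂⁿ and complex numbers α_j, β_j with σ(v_j) = α_j·w_j, σ(i·v_j) = β_j·w_j, and Im(conj(α_j)·β_j) > 0. Then the complex-linear part ∂σ, defined by ∂σ(v) = (1/2)·(σ(v) − i·σ(i·v)), is a complex-linear isomorphism of ℂⁿ. -/

import Mathlib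

/-!
Write `σ` as complex-linear part plus conjugate-linear part. If `σ (v j) = α j • w j` and
`σ (I • v j) = β j • w j` for a basis `v`, then `σ` is a diagonal map followed by the complex-linear
map `v j ↦ w j`. The latter has nonnegative real determinant, so `det σ` carries the sign of
`∏ j, Im (conj (α j) * β j)`.

A nonzero vector `u` in the kernel of the complex-linear part satisfies `σ (I • u) = -I • σ u`, so
`σ` maps the line `ℂ u` to the line `ℂ (σ u)` reversing orientations. The given lines have
independent images, hence `u` is not in their span and completes them to a basis, in which exactly
one factor of the product is negative: this contradicts `0 < det σ`.
-/

open Complex Module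
open scoped ComplexConjugate

section ComplexLinearPart

variable {V W : Type*} [AddCommGroup V] [Module ℂ V] [AddCommGroup W] [Module ℂ W]

theorem map_complex_smul_of_real_linear (σ : V →ₗ[ℝ] W) (z : ℂ) (u : V) :
    σ (z • u) = (z.re : ℂ) • σ u + (z.im : ℂ) • σ (I • u) := by
  have hz : z • u = z.re • u + z.im • I • u := by
    rw [← coe_smul z.re, ← coe_smul z.im, smul_smul, ← add_smul, re_add_im]
  rw [hz, map_add, map_smul, map_smul, coe_smul, coe_smul]

/-- The complex-linear part `∂σ` of a real-linear map `σ` between complex vector spaces; `σ - ∂σ`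
is conjugate-linear. -/
noncomputable def complexLinearPart (σ : V →ₗ[ℝ] W) : V →ₗ[ℂ] W where
  toFun u := (1 / 2 : ℂ) • (σ u - I • σ (I • u))
  map_add' x y := by
    simp only [smul_add, map_add]
    module
  map_smul' z u := by
    rw [smul_smul I z u, map_complex_smul_of_real_linear σ z,
      map_complex_smul_of_real_linear σ (I * z), RingHom.id_apply, I_mul_re, I_mul_im]
    push_cast
    match_scalars
    · linear_combination (1 / 2 : ℂ) * re_add_im z
    · linear_combination (z.im / 2 : ℂ) * I_sq - (I / 2) * re_add_im z

theorem complexLinearPart_apply (σ : V →ₗ[ℝ] W) (u : V) :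
    complexLinearPart σ u = (1 / 2 : ℂ) • (σ u - I • σ (I • u)) :=
  rfl

theorem map_I_smul_of_complexLinearPart_eq_zero {σ : V →ₗ[ℝ] W} {u : V}
    (hu : complexLinearPart σ u = 0) : σ (I • u) = -I • σ u := by
  rw [complexLinearPart_apply, smul_eq_zero_iff_right (by norm_num), sub_eq_zero] at hu
  rw [hu, smul_smul, neg_mul, I_mul_I, neg_neg, one_smul]

end ComplexLinearPart

section OrientedLines

variable {α β : ℂ}

theorem im_conj_mul_mul_add_im_conj_mul_mul (α β c : ℂ) :
    ((conj c * β).im : ℂ) * α + (conj α * c).im * β = (conj α * β).im * c := by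
  apply Complex.ext <;> simp <;> ring

theorem exists_re_mul_add_im_mul_eq (h : (conj α * β).im ≠ 0) (c : ℂ) :
    ∃ z : ℂ, z.re * α + z.im * β = c := by
  -- Cramer's rule
  refine ⟨⟨(conj c * β).im / (conj α * β).im, (conj α * c).im / (conj α * β).im⟩, ?_⟩
  rw [ofReal_div, ofReal_div, div_mul_eq_mul_div, div_mul_eq_mul_div, ← add_div,
    im_conj_mul_mul_add_im_conj_mul_mul, mul_div_cancel_left₀ _ (ofReal_ne_zero.2 h)]

theorem sub_I_mul_ne_zero_of_im_pos (h : 0 < (conj α * β).im) : α - I * β ≠ 0 := by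
  intro h₀
  have him : (conj α * β).im = -normSq β := by
    rw [sub_eq_zero.1 h₀, map_mul, conj_I, mul_assoc, ← normSq_eq_conj_mul_self, im_mul_ofReal,
      neg_im, I_im, neg_one_mul]
  linarith [normSq_nonneg β]

end OrientedLines

section LinearIndependence

variable {ι V W : Type*} [AddCommGroup V] [Module ℂ V] [AddCommGroup W] [Module ℂ W]
  {σ : V →ₗ[ℝ] W} {v : ι → V} {w : ι → W} {α β : ι → ℂ}

theorem linearIndependent_of_map_complex_lines (hσ : Function.Injective σ)
    (hv : LinearIndependent ℂ v) (hα : ∀ j, σ (v j) = α j • w j)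
    (hβ : ∀ j, σ (I • v j) = β j • w j) (hne : ∀ j, (conj (α j) * β j).im ≠ 0) :
    LinearIndependent ℂ w := by
  rw [linearIndependent_iff'] at hv ⊢
  intro s c hc j hj
  choose z hz using fun k ↦ exists_re_mul_add_im_mul_eq (hne k) (c k)
  have hσz : ∀ k, σ (z k • v k) = c k • w k := fun k ↦ by
    rw [map_complex_smul_of_real_linear, hα, hβ, smul_smul, smul_smul, ← add_smul, hz]
  have hsum : ∑ k ∈ s, z k • v k = 0 := by
    apply hσ
    rw [map_sum, map_zero, Finset.sum_congr rfl fun k _ ↦ hσz k, hc]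
  rw [← hz j, hv s z hsum j hj]
  simp

theorem linearIndependent_complexLinearPart_comp (hσ : Function.Injective σ)
    (hv : LinearIndependent ℂ v) (hα : ∀ j, σ (v j) = α j • w j)
    (hβ : ∀ j, σ (I • v j) = β j • w j) (hpos : ∀ j, 0 < (conj (α j) * β j).im) :
    LinearIndependent ℂ (complexLinearPart σ ∘ v) := by
  have hw := linearIndependent_of_map_complex_lines hσ hv hα hβ fun j ↦ (hpos j).ne'
  have hne : ∀ j, (1 / 2 : ℂ) * (α j - I * β j) ≠ 0 := fun j ↦
    mul_ne_zero (by norm_num) (sub_I_mul_ne_zero_of_im_pos (hpos j))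
  convert hw.units_smul fun j ↦ Units.mk0 _ (hne j) using 1
  ext1 j
  simp only [Function.comp_apply, complexLinearPart_apply, hα, hβ, smul_smul, ← sub_smul,
    Pi.smul_apply', Units.smul_mk0]

end LinearIndependence

section Determinant

variable {ι V : Type*} [AddCommGroup V] [Module ℂ V] {α β : ι → ℂ}

theorem det_eq_prod_im_of_preserves_lines [Fintype ι] (b : Basis ι ℂ V) {τ : V →ₗ[ℝ] V}
    (hα : ∀ j, τ (b j) = α j • b j) (hβ : ∀ j, τ (I • b j) = β j • b j) :
    LinearMap.det τ = ∏ j, (conj (α j) * β j).im := by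
  classical
  let B := basisOneI.smulTower b
  have hblock : LinearMap.toMatrix B B τ = Matrix.blockDiagonal fun j ↦
      !![(α j).re, (β j).re; (α j).im, (β j).im] := by
    ext ⟨r, i⟩ ⟨s, j⟩
    rw [LinearMap.toMatrix_apply, Basis.smulTower_repr, Basis.smulTower_apply,
      Matrix.blockDiagonal_apply]
    by_cases hij : i = j <;> fin_cases r <;> fin_cases s <;> simp [hα, hβ, hij]
  rw [← LinearMap.det_toMatrix B, hblock, Matrix.det_blockDiagonal]
  refine Finset.prod_congr rfl fun j _ ↦ ?_
  simp only [Matrix.det_fin_two_of, mul_im, conj_re, conj_im]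
  ring

theorem det_eq_normSq_mul_prod_im_of_map_lines [Fintype ι] (b : Basis ι ℂ V) {σ : V →ₗ[ℝ] V}
    {w : ι → V} (hα : ∀ j, σ (b j) = α j • w j) (hβ : ∀ j, σ (I • b j) = β j • w j) :
    LinearMap.det σ =
      normSq (LinearMap.det (b.constr ℂ w)) * ∏ j, (conj (α j) * β j).im := by
  let B := basisOneI.smulTower b
  let τ : V →ₗ[ℝ] V := B.constr ℝ fun x ↦ ![α x.2, β x.2] x.1 • b x.2
  have hB₀ : ∀ j, B (0, j) = b j := by simp [B, Basis.smulTower_apply]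
  have hB₁ : ∀ j, B (1, j) = I • b j := by simp [B, Basis.smulTower_apply]
  have hτα : ∀ j, τ (b j) = α j • b j := fun j ↦
    (congrArg τ (hB₀ j)).symm.trans (B.constr_basis ℝ _ (0, j))
  have hτβ : ∀ j, τ (I • b j) = β j • b j := fun j ↦
    (congrArg τ (hB₁ j)).symm.trans (B.constr_basis ℝ _ (1, j))
  have hσ : σ = (b.constr ℂ w).restrictScalars ℝ ∘ₗ τ := by
    refine B.ext fun ⟨r, j⟩ ↦ ?_
    fin_cases r <;> simp [hB₀, hB₁, hα, hβ, hτα, hτβ, -Basis.constr_apply_fintype]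
  rw [hσ, LinearMap.det_comp, LinearMap.det_restrictScalars, Algebra.norm_complex_apply,
    det_eq_prod_im_of_preserves_lines b hτα hτβ]

theorem det_nonpos_of_complexLinearPart_eq_zero [Finite ι] {b : Basis (Option ι) ℂ V}
    {σ : V →ₗ[ℝ] V} {w : ι → V} (hker : complexLinearPart σ (b none) = 0)
    (hα : ∀ j, σ (b (some j)) = α j • w j) (hβ : ∀ j, σ (I • b (some j)) = β j • w j)
    (hnonneg : ∀ j, 0 ≤ (conj (α j) * β j).im) : LinearMap.det σ ≤ 0 := by
  have := Fintype.ofFinite ι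
  let w' : Option ι → V := fun o ↦ o.elim (σ (b none)) w
  let α' : Option ι → ℂ := fun o ↦ o.elim 1 α
  let β' : Option ι → ℂ := fun o ↦ o.elim (-I) β
  have hα' : ∀ o, σ (b o) = α' o • w' o
    | none => by simp [α', w']
    | some j => by simp [hα, α', w']
  have hβ' : ∀ o, σ (I • b o) = β' o • w' o
    | none => map_I_smul_of_complexLinearPart_eq_zero hker
    | some j => by simp [hβ, β', w']
  have hprod : ∏ o, (conj (α' o) * β' o).im ≤ 0 := by
    rw [Fintype.prod_option]
    exact mul_nonpos_of_nonpos_of_nonneg (by simp [α', β'])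
      (Finset.prod_nonneg fun j _ ↦ hnonneg j)
  rw [det_eq_normSq_mul_prod_im_of_map_lines b hα' hβ']
  exact mul_nonpos_of_nonneg_of_nonpos (normSq_nonneg _) hprod

end Determinant

section Bijectivity

variable {ι V : Type*} [Fintype ι] [AddCommGroup V] [Module ℂ V] [FiniteDimensional ℂ V]

theorem exists_basis_option_of_notMem_span {v : ι → V} (hv : LinearIndependent ℂ v)
    (hcard : finrank ℂ V ≤ Fintype.card ι + 1) {u : V}
    (hu : u ∉ Submodule.span ℂ (Set.range v)) :
    ∃ b : Basis (Option ι) ℂ V, b none = u ∧ ∀ j, b (some j) = v j := by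
  have hli := hv.option hu
  have hfinrank : Fintype.card (Option ι) = finrank ℂ V :=
    hli.fintype_card_le_finrank.antisymm (by rwa [Fintype.card_option])
  refine ⟨basisOfLinearIndependentOfCardEqFinrank hli hfinrank, ?_, fun j ↦ ?_⟩ <;> simp

theorem holomorphic_part_is_complex_isomorphism_general {σ : V →ₗ[ℝ] V}
    (hdet : 0 < LinearMap.det σ) {v w : ι → V} {α β : ι → ℂ} (hv : LinearIndependent ℂ v)
    (hcard : finrank ℂ V ≤ Fintype.card ι + 1) (hα : ∀ j, σ (v j) = α j • w j)
    (hβ : ∀ j, σ (I • v j) = β j • w j) (hpos : ∀ j, 0 < (conj (α j) * β j).im) :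
    Function.Bijective (complexLinearPart σ) := by
  suffices hinj : Function.Injective (complexLinearPart σ) from
    ⟨hinj, LinearMap.injective_iff_surjective.1 hinj⟩
  have hσ : Function.Injective σ := (LinearMap.equivOfDetNeZero σ hdet.ne').injective
  refine (injective_iff_map_eq_zero _).2 fun u hu ↦ by_contra fun hu₀ ↦ hdet.not_ge ?_
  have hu_span : u ∉ Submodule.span ℂ (Set.range v) := fun hmem ↦
    hu₀ <| Submodule.disjoint_def.1 (Submodule.range_ker_disjoint
      (linearIndependent_complexLinearPart_comp hσ hv hα hβ hpos)) u hmem hu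
  obtain ⟨b, hbu, hbv⟩ := exists_basis_option_of_notMem_span hv hcard hu_span
  refine det_nonpos_of_complexLinearPart_eq_zero (w := w) (hbu.symm ▸ hu) (fun j ↦ ?_)
    (fun j ↦ ?_) fun j ↦ (hpos j).le
  · rw [hbv, hα]
  · rw [hbv, hβ]

end Bijectivity

/-- under the hypotheses of Lemma `deformation`, the
complex-linear part ∂σ, ∂σ(v) = (1/2)·(σ(v) − i·σ(i·v)), is a complex-linear
isomorphism of ℂⁿ. -/
theorem holomorphic_part_is_complex_isomorphism
    (n : ℕ) (hn : 1 ≤ n)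
    (σ : (Fin n → ℂ) →ₗ[ℝ] (Fin n → ℂ))
    (hdet : 0 < LinearMap.det σ)
    (v : Fin (n - 1) → (Fin n → ℂ))
    (hv : LinearIndependent ℂ v)
    (hlines : ∀ j : Fin (n - 1), ∃ (w : Fin n → ℂ) (α β : ℂ),
      w ≠ 0 ∧ σ (v j) = α • w ∧ σ (Complex.I • v j) = β • w ∧
      0 < ((starRingEnd ℂ) α * β).im) :
    IsLinearMap ℂ (fun u : Fin n → ℂ =>
      (1 / 2 : ℂ) • (σ u - Complex.I • σ (Complex.I • u))) ∧
    Function.Bijective (fun u : Fin n → ℂ =>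
      (1 / 2 : ℂ) • (σ u - Complex.I • σ (Complex.I • u))) := by
  refine ⟨(complexLinearPart σ).isLinear, ?_⟩
  have hcard : finrank ℂ (Fin n → ℂ) ≤ Fintype.card (Fin (n - 1)) + 1 := by
    rw [finrank_fin_fun, Fintype.card_fin]
    omega
  choose w α β _ hα hβ hpos using hlines
  exact holomorphic_part_is_complex_isomorphism_general hdet hv hcard hα hβ hpos
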